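/- There is no constant λ₀ ∈ ℝ such that equations (E1), (E2) and (E3) hold on I with λ ≡ λ₀; that is, the hypersurface of S³ × ℝ of the given form does not admit a Ricci soliton with potential vector field T. -/

import Mathlib

/-!
Write `a = α₁'` and `b = α₂'`. Subtracting (E3) from (E2) gives
`(a' - a * b) * (tan α₁ + cot α₁) = 0`, and `tan + cot = 1 / (sin * cos)` does not vanish, so
`a' = a * b` and (E2) reduces to `-2 * b ^ 2 = λ₀`. As `λ₀` is constant, `b * b' = 0`, hence also
`a * a' = 0` by `a ^ 2 + b ^ 2 = 1`, and therefore `a ^ 2 * b = 0`. At a point where `a = 0`, one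
has `b ^ 2 = 1`, `a' = b' = 0` and `λ₀ = -2`, so (E1) reads `0 = -2`. At a point where `b = 0`,
one has `λ₀ = 0`, so `b` vanishes on all of `I` and `b' = 0`; then `a ^ 2 = 1`, `a' = 0`, and
(E1) reads `2 = 0`.
-/

/-- there is no constant `λ₀` such that (E1), (E2), (E3) hold on `I`
with `λ ≡ λ₀`; i.e. the hypersurface of `S³ × ℝ` of the given form does not admit a
Ricci soliton with potential vector field `T`. -/
theorem stmt12
    (I : Set ℝ) (hIopen : IsOpen I) (hIne : I.Nonempty) (hIconn : I.OrdConnected)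
    (α₁ α₂ : ℝ → ℝ)
    (hα₁ : ContDiff ℝ (⊤ : ℕ∞) α₁) (hα₂ : ContDiff ℝ (⊤ : ℕ∞) α₂)
    (hunit : ∀ s ∈ I, (deriv α₁ s) ^ 2 + (deriv α₂ s) ^ 2 = 1)
    (hsc : ∀ s ∈ I, Real.sin (α₁ s) * Real.cos (α₁ s) ≠ 0) :
    ¬ ∃ lam₀ : ℝ,
      (∀ s ∈ I, deriv (deriv α₂) s
        + deriv (deriv α₁) s * (Real.tan (α₁ s) - Real.cot (α₁ s))
        + 2 * (deriv α₁ s) ^ 2 = lam₀) ∧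
      (∀ s ∈ I, (deriv (deriv α₁) s - deriv α₁ s * deriv α₂ s) * Real.tan (α₁ s)
        - 2 * (deriv α₂ s) ^ 2 = lam₀) ∧
      (∀ s ∈ I, (deriv α₁ s * deriv α₂ s - deriv (deriv α₁) s) * Real.cot (α₁ s)
        - 2 * (deriv α₂ s) ^ 2 = lam₀) := by
  rintro ⟨l, h1, h2, h3⟩
  obtain ⟨s, hs⟩ := hIne
  have hI : I ∈ nhds s := hIopen.mem_nhds hs
  have key : ∀ t ∈ I, deriv (deriv α₁) t = deriv α₁ t * deriv α₂ t := by
    intro t ht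
    have e2 := h2 t ht
    have e3 := h3 t ht
    have hsin : Real.sin (α₁ t) ≠ 0 := left_ne_zero_of_mul (hsc t ht)
    have hcos : Real.cos (α₁ t) ≠ 0 := right_ne_zero_of_mul (hsc t ht)
    have htc : Real.tan (α₁ t) + Real.cot (α₁ t)
        = 1 / (Real.sin (α₁ t) * Real.cos (α₁ t)) := by
      rw [Real.tan_eq_sin_div_cos, Real.cot_eq_cos_div_sin]
      field_simp
      exact Real.sin_sq_add_cos_sq _
    have hne : Real.tan (α₁ t) + Real.cot (α₁ t) ≠ 0 := by
      rw [htc]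
      exact one_div_ne_zero (hsc t ht)
    have hmul : (deriv (deriv α₁) t - deriv α₁ t * deriv α₂ t)
        * (Real.tan (α₁ t) + Real.cot (α₁ t)) = 0 := by linarith
    exact sub_eq_zero.mp ((mul_eq_zero.mp hmul).resolve_right hne)
  have hb : ∀ t ∈ I, -2 * (deriv α₂ t) ^ 2 = l := by
    intro t ht
    have e2 := h2 t ht
    rw [key t ht] at e2
    linarith
  have hd2 : DifferentiableAt ℝ (deriv α₂) s :=
    (((contDiff_infty_iff_deriv.mp hα₂).2).differentiable (by simp)) s
  have hbB : deriv α₂ s * deriv (deriv α₂) s = 0 := by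
    have hev : (fun t => (deriv α₂ t) ^ 2) =ᶠ[nhds s] fun _ => -l / 2 := by
      filter_upwards [hI] with t ht
      linarith [hb t ht]
    have h := (hd2.hasDerivAt.pow 2).unique
      ((hasDerivAt_const s (-l / 2)).congr_of_eventuallyEq hev)
    simp at h
    simpa using h
  have hd1 : DifferentiableAt ℝ (deriv α₁) s :=
    (((contDiff_infty_iff_deriv.mp hα₁).2).differentiable (by simp)) s
  have haA : deriv α₁ s * deriv (deriv α₁) s = 0 := by
    have hev : (fun t => (deriv α₁ t) ^ 2) =ᶠ[nhds s] fun _ => 1 + l / 2 := by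
      filter_upwards [hI] with t ht
      linarith [hb t ht, hunit t ht]
    have h := (hd1.hasDerivAt.pow 2).unique
      ((hasDerivAt_const s (1 + l / 2)).congr_of_eventuallyEq hev)
    simp at h
    simpa using h
  have e1 := h1 s hs
  have eu := hunit s hs
  have eb := hb s hs
  have ek := key s hs
  by_cases ha : deriv α₁ s = 0
  · have hb0 : deriv α₂ s ≠ 0 := by
      intro h0
      simp [ha, h0] at eu
    have hB := (mul_eq_zero.mp hbB).resolve_left hb0
    rw [hB, ek, ha] at e1
    rw [ha] at eu
    linarith
  · have hA := (mul_eq_zero.mp haA).resolve_left ha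
    have hb0 : deriv α₂ s = 0 := by
      rw [hA] at ek
      exact (mul_eq_zero.mp ek.symm).resolve_left ha
    have hl : l = 0 := by
      rw [← eb, hb0]
      norm_num
    have hev : deriv α₂ =ᶠ[nhds s] fun _ => 0 := by
      filter_upwards [hI] with t ht
      have := hb t ht
      exact pow_eq_zero_iff two_ne_zero |>.mp (by linarith)
    have hB : deriv (deriv α₂) s = 0 := by
      rw [hev.deriv_eq]
      simp
    rw [hB, hA, hl] at e1
    rw [hb0] at eu
    linarith
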